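/- Let q = p^r ≡ 5 (mod 8) for a prime p, and write q = x^2 + y^2 with integers x, y such that x ≡ 1 (mod 4) and p ∤ x. Let χ_4 be a multiplicative character of F_q of order 4. Then, as identities of complex numbers: R_4(q) = 2x, S_4(q) = 4x^2 − 6q, and S⁻_4(q) = 2q − 4x^2. -/

import Mathlib

/-!
Put `χ = χ₄`, so that `χ(-1) = -1` because `q ≡ 5 (mod 8)`, and let `J = J(χ, χ²)`. The substitution
`a ↦ a / (a - 1)` (`jac_eq_neg_one_mul`) gives `J(χ, χ) = -J` and `J(χ³, χ³) = -J̄`, so all Jacobi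
sums that occur are among `±J`, `±J̄`. Summing the admissible terms, with `J J̄ = q`,
gives `R = J + J̄`, `S = J² + J̄² - 4q` and `S⁻ = -(J² + J̄²)`. Everything reduces to `Re J = x`.

For this, `J = a + b i` is a Gaussian integer of norm `q` (`jac_key`). Two facts about `a` are used.

* `a ≡ 1 (mod 4)`: one has `J ≡ -q (mod 2 - 2i)` (`jacobiSum_congr`), and together with
  `a² + b² = q ≡ 5 (mod 8)` this fixes the sign of `a`.
* `p ∤ a`: write `q = 4n + 1`. Under a suitable reduction `ℤ[i] → F` the character `χ` becomes
  `a ↦ a ^ n`, and expanding `(1 - a) ^ (2n)` shows that `2a = J + J̄` reduces to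
  `± (2n choose n)` (`sum_pow_eq`), which is nonzero in `F` by Lucas' theorem (`not_dvd_choose`).

A representation `q = a² + b²` with these two properties is unique up to the sign of `b`
(`sq_add_sq_unique`): `q` divides `(a y - b x)(a y + b x)` and `p` cannot divide both factors, so
`q` divides one of them, and `(a y - b x)² + (a x + b y)² = q²` leaves only `a = ± x`.
-/


/-- Jacobi sum `J(A,B) = ∑_{a ∈ F} A(a) B(1-a)`. -/
noncomputable def jac {F : Type} [Field F] [Fintype F] (A B : MulChar F ℂ) : ℂ :=
  ∑ a : F, A a * B (1 - a)

/-- `R_k(q) = ∑_{1 ≤ s,t ≤ k-1, s+t ≢ 0 (k)} J(χ^s, χ^t)`. -/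
noncomputable def Rk {F : Type} [Field F] [Fintype F] (k : ℕ) (χ : MulChar F ℂ) : ℂ :=
  ∑ s ∈ Finset.Icc 1 (k - 1), ∑ t ∈ Finset.Icc 1 (k - 1),
    if (s : ZMod k) + t ≠ 0 then jac (χ ^ s) (χ ^ t) else 0

/-- `R⁻_k(q)`: as `R_k(q)` but with each term multiplied by `(-1)^{s+t}`. -/
noncomputable def Rmk {F : Type} [Field F] [Fintype F] (k : ℕ) (χ : MulChar F ℂ) : ℂ :=
  ∑ s ∈ Finset.Icc 1 (k - 1), ∑ t ∈ Finset.Icc 1 (k - 1),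
    if (s : ZMod k) + t ≠ 0 then (-1 : ℂ) ^ (s + t) * jac (χ ^ s) (χ ^ t) else 0

/-- `S_k(q) = ∑_{1 ≤ s,t,v ≤ k-1, s+t,v+t,v-s ≢ 0 (k)} J(χ^s, χ^t) J(χ^{-s}, χ^v)`. -/
noncomputable def Sk {F : Type} [Field F] [Fintype F] (k : ℕ) (χ : MulChar F ℂ) : ℂ :=
  ∑ s ∈ Finset.Icc 1 (k - 1), ∑ t ∈ Finset.Icc 1 (k - 1), ∑ v ∈ Finset.Icc 1 (k - 1),
    if (s : ZMod k) + t ≠ 0 ∧ (v : ZMod k) + t ≠ 0 ∧ (v : ZMod k) - s ≠ 0 then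
      jac (χ ^ s) (χ ^ t) * jac (χ⁻¹ ^ s) (χ ^ v) else 0

/-- `S⁻_k(q)`: as `S_k(q)` but with each term multiplied by `(-1)^{s+t}`. -/
noncomputable def Smk {F : Type} [Field F] [Fintype F] (k : ℕ) (χ : MulChar F ℂ) : ℂ :=
  ∑ s ∈ Finset.Icc 1 (k - 1), ∑ t ∈ Finset.Icc 1 (k - 1), ∑ v ∈ Finset.Icc 1 (k - 1),
    if (s : ZMod k) + t ≠ 0 ∧ (v : ZMod k) + t ≠ 0 ∧ (v : ZMod k) - s ≠ 0 then
      (-1 : ℂ) ^ (s + t) * (jac (χ ^ s) (χ ^ t) * jac (χ⁻¹ ^ s) (χ ^ v)) else 0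

/-! ### Elementary number theory -/

/-- If `4 n + 1` is a power of the prime `p ≡ 1 (mod 4)`, then the base-`p` digits of `2 n` and `n`
are all `(p - 1) / 2` and `(p - 1) / 4`, so by Lucas' theorem `p` does not divide `(2n choose n)`. -/
lemma not_dvd_choose {p c : ℕ} (hp : p.Prime) (hc : p = 4 * c + 1) (r : ℕ) :
    ∀ n : ℕ, p ^ r = 4 * n + 1 → ¬ p ∣ (2 * n).choose n := by
  have : Fact p.Prime := ⟨hp⟩
  induction r with
  | zero =>
    intro n hn
    have : n = 0 := by simpa using hn
    subst this
    simpa using hp.one_lt.ne'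
  | succ r ih =>
    intro n hn
    obtain ⟨m, hm⟩ : ∃ m, p ^ r = 4 * m + 1 := by
      have h : p ^ r % 4 = 1 := by
        rw [Nat.pow_mod, show p % 4 = 1 by omega]; simp
      exact ⟨p ^ r / 4, by omega⟩
    have hnm : n = c + p * m := by
      have : 4 * n + 1 = (4 * m + 1) * p := by rw [← hn, pow_succ, hm]
      nlinarith
    have hpos := hp.pos
    have h1 : (2 * n) % p = 2 * c := by
      rw [hnm, show 2 * (c + p * m) = 2 * c + p * (2 * m) by ring, Nat.add_mul_mod_self_left,
        Nat.mod_eq_of_lt (by omega)]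
    have h2 : n % p = c := by
      rw [hnm, Nat.add_mul_mod_self_left, Nat.mod_eq_of_lt (by omega)]
    have h3 : (2 * n) / p = 2 * m := by
      rw [hnm, show 2 * (c + p * m) = 2 * c + p * (2 * m) by ring, Nat.add_mul_div_left _ _ hpos,
        Nat.div_eq_of_lt (by omega)]; simp
    have h4 : n / p = m := by
      rw [hnm, Nat.add_mul_div_left _ _ hpos, Nat.div_eq_of_lt (by omega)]; simp
    have hL := Choose.choose_modEq_choose_mod_mul_choose_div_nat (n := 2 * n) (k := n) (p := p)
    rw [h1, h2, h3, h4] at hL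
    rw [(hL.dvd_iff dvd_rfl), hp.dvd_mul, not_or]
    refine ⟨fun h => ?_, ih m hm⟩
    have h5 : p ∣ (2 * c).factorial := by
      rw [← Nat.choose_mul_factorial_mul_factorial (show c ≤ 2 * c by omega)]
      exact (h.mul_right _).mul_right _
    have := hp.dvd_factorial.mp h5
    omega

/-- Uniqueness of the representation of an odd prime power as a sum of two squares whose odd
member is prime to `p` and `≡ 1 (mod 4)`. -/
lemma sq_add_sq_unique {p r : ℕ} (hp : p.Prime) {q a b x y : ℤ} (hr : r ≠ 0)
    (hq : q = (p : ℤ) ^ r) (hq2 : q % 2 = 1) (hab : q = a ^ 2 + b ^ 2) (hxy : q = x ^ 2 + y ^ 2)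
    (ha : a % 4 = 1) (hx : x % 4 = 1) (hpa : ¬ (p : ℤ) ∣ a) (hpx : ¬ (p : ℤ) ∣ x) : a = x := by
  have hpi : Prime (p : ℤ) := Nat.prime_iff_prime_int.mp hp
  have hpq : (p : ℤ) ∣ q := hq ▸ dvd_pow_self _ hr
  -- it suffices to treat the factor `a y - b x`, since `b` may be replaced by `-b`
  have key : ∀ b : ℤ, q = a ^ 2 + b ^ 2 → q ∣ a * y - b * x → a = x := by
    intro b hab hd
    have hN : (a * y - b * x) ^ 2 + (a * x + b * y) ^ 2 = q ^ 2 := by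
      rw [sq q]; nth_rw 1 [hab]; rw [hxy]; ring
    obtain ⟨k, hk⟩ := hd
    have hq0 : q ≠ 0 := by rintro rfl; omega
    rcases eq_or_ne k 0 with rfl | hk0
    · have h1 : a * y = b * x := by linarith
      have h2 : q * (a ^ 2 - x ^ 2) = 0 := by
        have : q * (a ^ 2 - x ^ 2) = (a * y) ^ 2 - (b * x) ^ 2 := by
          rw [mul_sub]; nth_rw 1 [hxy]; rw [hab]; ring
        rw [this, h1, sub_self]
      have h3 : (a - x) * (a + x) = 0 := by
        rcases mul_eq_zero.mp h2 with h | h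
        · exact absurd h hq0
        · linarith
      rcases mul_eq_zero.mp h3 with h | h <;> omega
    -- if `q` divides `a y - b x ≠ 0`, then `a x + b y = 0`, against `a`, `x` odd and `b` even
    · exfalso
      have hk1 : 1 ≤ k ^ 2 := Int.add_one_le_of_lt (by positivity : 0 < k ^ 2)
      have h4 : (a * x + b * y) ^ 2 = 0 := by
        rw [hk] at hN
        nlinarith [sq_nonneg (a * x + b * y), sq_nonneg q]
      have h5 : a * x + b * y = 0 := by simpa using h4
      have hb : b % 2 = 0 := by
        rcases Int.emod_two_eq_zero_or_one b with h | h
        · exact h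
        · have : (a ^ 2 + b ^ 2) % 2 = 0 := by
            simp [sq, Int.add_emod, Int.mul_emod, h, show a % 2 = 1 by omega]
          omega
      have : (a * x + b * y) % 2 = 1 := by
        simp [Int.add_emod, Int.mul_emod, hb, show a % 2 = 1 by omega, show x % 2 = 1 by omega]
      omega
  have hprod : (p : ℤ) ^ r ∣ (a * y - b * x) * (a * y + b * x) := by
    refine ⟨a ^ 2 - x ^ 2, ?_⟩
    rw [← hq, mul_sub]; nth_rw 1 [hxy]; rw [hab]; ring
  have hnot : ¬ ((p : ℤ) ∣ a * y - b * x ∧ (p : ℤ) ∣ a * y + b * x) := by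
    rintro ⟨h1, h2⟩
    have h3 : (p : ℤ) ∣ 2 * (a * y) := by
      have := dvd_add h1 h2
      rwa [show a * y - b * x + (a * y + b * x) = 2 * (a * y) by ring] at this
    rcases hpi.dvd_or_dvd h3 with h | h
    · have : q % 2 = 0 := by
        have h2p : p = 2 := (Nat.prime_dvd_prime_iff_eq hp Nat.prime_two).mp (by exact_mod_cast h)
        subst h2p
        have : (2 : ℤ) ∣ q := by exact_mod_cast hpq
        omega
      omega
    · rcases hpi.dvd_or_dvd h with h | h
      · exact hpa h
      · apply hpx
        refine hpi.dvd_of_dvd_pow (n := 2) ?_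
        rw [show x ^ 2 = q - y ^ 2 by linarith]
        exact dvd_sub hpq (dvd_pow h two_ne_zero)
  by_cases h1 : (p : ℤ) ∣ a * y - b * x
  · have h2 : ¬ (p : ℤ) ∣ a * y + b * x := fun h => hnot ⟨h1, h⟩
    have h3 : IsCoprime ((p : ℤ) ^ r) (a * y + b * x) :=
      ((hpi.irreducible.coprime_iff_not_dvd).mpr h2).pow_left
    exact key b hab (hq ▸ h3.dvd_of_dvd_mul_right hprod)
  · have h3 : IsCoprime ((p : ℤ) ^ r) (a * y - b * x) :=
      ((hpi.irreducible.coprime_iff_not_dvd).mpr h1).pow_left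
    refine key (-b) (by rw [hab]; ring) ?_
    rw [show a * y - -b * x = a * y + b * x by ring]
    exact hq ▸ h3.dvd_of_dvd_mul_left hprod

/-! ### Power sums in the finite field -/

/-- The reduction of `2 Re J(χ, χ²)` modulo a prime above `p`: only the term with exponent `q - 1`
in the binomial expansion contributes. -/
lemma sum_pow_eq {F : Type} [Field F] [Fintype F] {n : ℕ} (hn : 0 < n)
    (hcard : Fintype.card F = 4 * n + 1) :
    ∑ a : F, a ^ n * (1 - a) ^ (2 * n) + ∑ a : F, a ^ (3 * n) * (1 - a) ^ (2 * n)
      = -((-1) ^ n * ((2 * n).choose n : F)) := by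
  have hexp : ∀ a : F, (1 - a) ^ (2 * n) =
      ∑ j ∈ Finset.range (2 * n + 1), (-1) ^ j * a ^ j * ((2 * n).choose j : F) := by
    intro a
    rw [show 1 - a = -a + 1 by ring, add_pow]
    refine Finset.sum_congr rfl fun j _ => ?_
    rw [neg_pow]; simp
  have hS : ∀ m : ℕ, ∑ a : F, a ^ m * (1 - a) ^ (2 * n) =
      ∑ j ∈ Finset.range (2 * n + 1), (-1) ^ j * ((2 * n).choose j : F) * ∑ a : F, a ^ (m + j) := by
    intro m
    simp_rw [hexp, Finset.mul_sum]
    rw [Finset.sum_comm]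
    refine Finset.sum_congr rfl fun j _ => Finset.sum_congr rfl fun a _ => ?_
    rw [pow_add]; ring
  have hlt : ∀ i < 4 * n, ∑ a : F, a ^ i = 0 := fun i hi =>
    FiniteField.sum_pow_lt_card_sub_one F i (by omega)
  rw [hS, hS, Finset.sum_eq_zero, zero_add, Finset.sum_eq_single n]
  · have : ∑ a : F, a ^ (3 * n + n) = -1 := by
      classical
      have h0 : ∀ a : F, a ^ (3 * n + n) = 1 - if a = 0 then 1 else 0 := by
        intro a
        split_ifs with h
        · rw [h, zero_pow (by omega)]; simp
        · have := FiniteField.pow_card_sub_one_eq_one a h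
          rw [hcard] at this
          rw [show 3 * n + n = 4 * n + 1 - 1 by omega, this]; simp
      simp_rw [h0]
      have hc0 : ((Fintype.card F : ℕ) : F) = 0 := FiniteField.cast_card_eq_zero F
      simp [hc0]
    rw [this]; ring
  · intro j hj hjn
    rw [Finset.mem_range] at hj
    rcases lt_or_gt_of_ne hjn with h | h
    · rw [hlt _ (by omega), mul_zero]
    · have : ∀ a : F, a ^ (3 * n + j) = a ^ (j - n) := by
        intro a
        rw [show 3 * n + j = Fintype.card F + (j - n - 1) by omega, pow_add, FiniteField.pow_card,
          ← pow_succ']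
        congr 1; omega
      simp_rw [this]
      rw [hlt _ (by omega), mul_zero]
  · intro h; exact absurd (Finset.mem_range.mpr (by omega)) h
  · intro j hj
    rw [Finset.mem_range] at hj
    rw [hlt _ (by omega), mul_zero]

/-! ### Jacobi sums -/

/-- The substitution `a ↦ a / (a - 1)` gives `J(A, B) = A(-1) J(A, (AB)⁻¹)`. -/
lemma jac_eq_neg_one_mul {F : Type} [Field F] [Fintype F] (A B C : MulChar F ℂ) (h : A * B * C = 1) :
    jac A B = A (-1) * jac A C := by
  classical
  unfold jac
  rw [Finset.mul_sum, ← Finset.sum_subset (Finset.subset_univ (Finset.univ.erase (1 : F))),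
    ← Finset.sum_subset (Finset.subset_univ (Finset.univ.erase (1 : F)))]
  · have hmem : ∀ a : F, a ≠ 1 → a / (a - 1) ≠ 1 := by
      intro a ha h
      rw [div_eq_one_iff_eq (sub_ne_zero.mpr ha)] at h
      exact one_ne_zero (by linear_combination h : (1 : F) = 0)
    have hinv : ∀ a : F, a ≠ 1 → (a / (a - 1)) / (a / (a - 1) - 1) = a := by
      intro a ha
      have := sub_ne_zero.mpr ha
      rw [div_sub_one this]
      field_simp
      ring
    refine Finset.sum_nbij' (fun a => a / (a - 1)) (fun a => a / (a - 1)) ?_ ?_ ?_ ?_ ?_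
    · intro a ha; simp only [Finset.mem_erase, Finset.mem_univ, and_true] at *; exact hmem a ha
    · intro a ha; simp only [Finset.mem_erase, Finset.mem_univ, and_true] at *; exact hmem a ha
    · intro a ha; simp only [Finset.mem_erase, Finset.mem_univ, and_true] at *; exact hinv a ha
    · intro a ha; simp only [Finset.mem_erase, Finset.mem_univ, and_true] at *; exact hinv a ha
    · intro a ha
      simp only [Finset.mem_erase, Finset.mem_univ, and_true] at ha
      have h1 := sub_ne_zero.mpr ha
      have h1' : 1 - a ≠ 0 := sub_ne_zero.mpr (Ne.symm ha)
      have e1 : A a = A (-1) * A (a / (a - 1)) * A (1 - a) := by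
        rw [← map_mul, ← map_mul]; congr 1; field_simp; ring
      have e2 : B (1 - a) * C (1 - a) * A (1 - a) = 1 := by
        have : (A * B * C) (1 - a) = 1 := by
          rw [h, MulChar.one_apply (isUnit_iff_ne_zero.mpr h1')]
        simp only [MulChar.mul_apply] at this
        linear_combination this
      have e3 : C (1 - a) * C (1 - a / (a - 1)) = 1 := by
        rw [← map_mul]
        have : (1 - a) * (1 - a / (a - 1)) = 1 := by field_simp; ring
        rw [this, map_one]
      rw [e1]
      linear_combination (-A (-1) * A (a / (a - 1)) * A (1 - a) * B (1 - a)) * e3 +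
        (A (-1) * A (a / (a - 1)) * C (1 - a / (a - 1))) * e2
  · intro a _ ha
    have : a = 1 := by simpa using ha
    subst this; simp [MulChar.map_zero]
  · intro a _ ha
    have : a = 1 := by simpa using ha
    subst this; simp [MulChar.map_zero]

/-- For a quartic character with values in `ℤ[i]`, `J(χ, χ²) ≡ -q (mod 2 - 2i)`, since
`(χ(a) - 1)(χ²(1 - a) - 1)` is a multiple of `2 - 2i` whenever `a ≠ 0, 1`. -/
lemma jacobiSum_congr {F : Type} [Field F] [Fintype F] (χ : MulChar F GaussianInt)
    (h4 : χ ^ 4 = 1) (h1 : χ ≠ 1) (h2 : χ ^ 2 ≠ 1) :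
    ∃ w : GaussianInt, jacobiSum χ (χ ^ 2) + (Fintype.card F : GaussianInt) = ⟨2, -2⟩ * w := by
  have hval : ∀ a : F, a ≠ 0 → χ a = 1 ∨ χ a = -1 ∨ χ a = ⟨0, 1⟩ ∨ χ a = ⟨0, -1⟩ := by
    intro a ha
    have h : χ a ^ 4 = 1 := by
      rw [← MulChar.pow_apply' χ (by norm_num), h4,
        MulChar.one_apply (isUnit_iff_ne_zero.mpr ha)]
    have hI : (⟨0, 1⟩ : GaussianInt) * ⟨0, 1⟩ = -1 := by decide
    have hI' : (⟨0, -1⟩ : GaussianInt) = -⟨0, 1⟩ := by decide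
    rw [hI']
    generalize (⟨0, 1⟩ : GaussianInt) = I at *
    have : (χ a - 1) * ((χ a + 1) * ((χ a - I) * (χ a + I))) = 0 := by
      linear_combination h - (χ a ^ 2 - 1) * hI
    rcases mul_eq_zero.mp this with h | h
    · left; linear_combination h
    rcases mul_eq_zero.mp h with h | h
    · right; left; linear_combination h
    rcases mul_eq_zero.mp h with h | h
    · right; right; left; linear_combination h
    · right; right; right; linear_combination h
  have hterm : ∀ a : F, (⟨2, -2⟩ : GaussianInt) ∣
      χ a * (χ ^ 2) (1 - a) - χ a - (χ ^ 2) (1 - a) + 1 := by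
    intro a
    rcases eq_or_ne a 0 with rfl | ha
    · simp
    rcases eq_or_ne a 1 with rfl | ha1
    · simp
    rw [MulChar.pow_apply' χ two_ne_zero]
    rw [show χ a * χ (1 - a) ^ 2 - χ a - χ (1 - a) ^ 2 + 1 = (χ a - 1) * (χ (1 - a) ^ 2 - 1) by ring]
    have hb : χ (1 - a) ^ 2 - 1 = 0 ∨ χ (1 - a) ^ 2 - 1 = -2 := by
      rcases hval (1 - a) (sub_ne_zero.mpr ha1.symm) with h | h | h | h <;> rw [h] <;> decide
    rcases hb with h | h
    · rw [h, mul_zero]; exact dvd_zero _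
    rw [h]
    rcases hval a ha with h | h | h | h <;> rw [h]
    · exact ⟨0, by decide⟩
    · exact ⟨⟨1, 1⟩, by decide⟩
    · exact ⟨1, by decide⟩
    · exact ⟨⟨0, 1⟩, by decide⟩
  have hs : (⟨2, -2⟩ : GaussianInt) ∣
      ∑ a : F, (χ a * (χ ^ 2) (1 - a) - χ a - (χ ^ 2) (1 - a) + 1) :=
    Finset.dvd_sum fun a _ => hterm a
  obtain ⟨w, hw⟩ := hs
  refine ⟨w, ?_⟩
  rw [← hw, Finset.sum_add_distrib, Finset.sum_sub_distrib, Finset.sum_sub_distrib,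
    MulChar.sum_eq_zero_of_ne_one h1]
  have : ∑ a : F, (χ ^ 2) (1 - a) = 0 := by
    rw [← MulChar.sum_eq_zero_of_ne_one h2]
    exact (Equiv.subLeft (1 : F)).sum_comp (fun a => (χ ^ 2) a)
  rw [this]
  simp [jacobiSum]

/-- A quartic character sends some generator of `Fˣ` to `i`. -/
lemma exists_generator {F : Type} [Field F] [Fintype F] (χ : MulChar F ℂ) (hχ : orderOf χ = 4) :
    ∃ g : Fˣ, (∀ u, u ∈ Subgroup.zpowers g) ∧ χ g = Complex.I := by
  obtain ⟨g, hg⟩ := IsCyclic.exists_generator (α := Fˣ)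
  have h4 : χ ^ 4 = 1 := hχ ▸ pow_orderOf_eq_one χ
  have h2 : χ ^ 2 ≠ 1 := pow_ne_one_of_lt_orderOf two_ne_zero (by omega)
  have e4 : χ g ^ 4 = 1 := by
    rw [← MulChar.pow_apply' χ (by norm_num), h4, MulChar.one_apply_coe]
  have e2 : χ g ^ 2 ≠ 1 := by
    intro h
    apply h2
    rw [MulChar.eq_iff hg, MulChar.one_apply_coe, MulChar.pow_apply' χ two_ne_zero, h]
  have e : (χ g - Complex.I) * (χ g + Complex.I) = 0 := by
    have : (χ g ^ 2 - 1) * (χ g ^ 2 + 1) = 0 := by linear_combination e4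
    have := (mul_eq_zero.mp this).resolve_left (sub_ne_zero.mpr e2)
    linear_combination this - Complex.I_sq
  rcases mul_eq_zero.mp e with h | h
  · exact ⟨g, hg, sub_eq_zero.mp h⟩
  · refine ⟨g⁻¹, by simpa using hg, ?_⟩
    have h1 : χ g * χ (g⁻¹ : Fˣ) = 1 := by rw [← map_mul]; simp
    rw [eq_neg_of_add_eq_zero_left h] at h1
    linear_combination Complex.I * h1 + χ (g⁻¹ : Fˣ) * Complex.I_sq

/-- `J(χ, χ²)` is a Gaussian integer of norm `q`, whose real part is `≡ 1 (mod 4)` and prime to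
`p`. -/
lemma jac_key {F : Type} [Field F] [Fintype F] (p r n : ℕ) (hp : p.Prime)
    (hq : Fintype.card F = p ^ r) (hn : Fintype.card F = 4 * n + 1) (hodd : n % 2 = 1)
    (hp4 : p % 4 = 1) (χ : MulChar F ℂ) (hχ : orderOf χ = 4) :
    ∃ z : GaussianInt, jac χ (χ ^ 2) = z ∧ jac (χ ^ 3) (χ ^ 2) = (star z : GaussianInt) ∧
      (Fintype.card F : ℤ) = z.re ^ 2 + z.im ^ 2 ∧ z.re % 4 = 1 ∧ ¬ (p : ℤ) ∣ z.re ∧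
      χ (-1) = -1 := by
  classical
  have : Fact p.Prime := ⟨hp⟩
  have hchar : CharP F p := charP_of_card_eq_prime_pow hq
  obtain ⟨g, hg, hgI⟩ := exists_generator χ hχ
  have h4 : χ ^ 4 = 1 := hχ ▸ pow_orderOf_eq_one χ
  have h1 : χ ≠ 1 := by
    rintro rfl; simp at hχ
  have h2 : χ ^ 2 ≠ 1 := pow_ne_one_of_lt_orderOf two_ne_zero (by omega)
  have h3 : χ ^ 3 ≠ 1 := pow_ne_one_of_lt_orderOf (by norm_num) (by omega)
  have hinv : χ⁻¹ = χ ^ 3 := by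
    rw [inv_eq_iff_mul_eq_one, ← pow_succ', h4]
  have hinv2 : (χ ^ 2)⁻¹ = χ ^ 2 := by
    rw [inv_eq_iff_mul_eq_one, ← pow_add, h4]
  have hcardU : Fintype.card Fˣ = 4 * n := by
    rw [Fintype.card_units, hn]; rfl
  have hord : orderOf g = 4 * n := by
    rw [orderOf_eq_card_of_forall_mem_zpowers hg, Nat.card_eq_fintype_card, hcardU]
  -- `g ^ n` is a square root of `-1` in `F`
  have hgn : (g : F) ^ (2 * n) = -1 := by
    have e : ((g : F) ^ (2 * n) - 1) * ((g : F) ^ (2 * n) + 1) = 0 := by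
      have : (g : F) ^ (4 * n) = 1 := by
        rw [← hord, ← Units.val_pow_eq_pow_val, pow_orderOf_eq_one, Units.val_one]
      have h' : (g : F) ^ (4 * n) = (g : F) ^ (2 * n) * (g : F) ^ (2 * n) := by
        rw [← pow_add]; congr 1; ring
      linear_combination this - h'
    rcases mul_eq_zero.mp e with h | h
    · exfalso
      have h' : g ^ (2 * n) = 1 := by
        ext; push_cast; exact sub_eq_zero.mp h
      have := Nat.le_of_dvd (by omega) (orderOf_dvd_of_pow_eq_one h')
      omega
    · exact eq_neg_of_add_eq_zero_left h
  -- the quartic character with values in the Gaussian integers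
  let ι : GaussianIntˣ := ⟨⟨0, 1⟩, ⟨0, -1⟩, by decide, by decide⟩
  have hι : ι ∈ rootsOfUnity (Fintype.card Fˣ) GaussianInt := by
    rw [hcardU, mem_rootsOfUnity, pow_mul, show ι ^ 4 = 1 from by ext : 1; decide, one_pow]
  let χ₀ : MulChar F GaussianInt := MulChar.ofRootOfUnity hι hg
  have hχ₀g : χ₀ g = ⟨0, 1⟩ := MulChar.ofRootOfUnity_spec hι hg
  have hcomp : χ₀.ringHomComp GaussianInt.toComplex = χ := by
    rw [MulChar.eq_iff hg, MulChar.ringHomComp_apply, hχ₀g, hgI, GaussianInt.toComplex_def]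
    simp
  have hinj : Function.Injective GaussianInt.toComplex := fun a b h =>
    GaussianInt.toComplex_inj.mp h
  have hpow : ∀ k : ℕ, (χ₀ ^ k).ringHomComp GaussianInt.toComplex = χ ^ k := fun k => by
    rw [← MulChar.ringHomComp_pow, hcomp]
  have h4' : χ₀ ^ 4 = 1 := by
    rw [MulChar.eq_iff hg, MulChar.pow_apply' χ₀ (by norm_num), hχ₀g, MulChar.one_apply_coe]
    decide
  have h1' : χ₀ ≠ 1 := (MulChar.ringHomComp_ne_one_iff hinj).mp (by rwa [hcomp])
  have h2' : χ₀ ^ 2 ≠ 1 := (MulChar.ringHomComp_ne_one_iff hinj).mp (by rwa [hpow])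
  have hJ : ∀ k l : ℕ, jac (χ ^ k) (χ ^ l) = (jacobiSum (χ₀ ^ k) (χ₀ ^ l) : GaussianInt) := by
    intro k l
    rw [← jacobiSum_ringHomComp, hpow, hpow]; rfl
  set z := jacobiSum χ₀ (χ₀ ^ 2) with hz
  have hz1 : jac χ (χ ^ 2) = z := by simpa using hJ 1 2
  have hz2 : jac (χ ^ 3) (χ ^ 2) = (star z : GaussianInt) := by
    rw [GaussianInt.toComplex_star, ← hz1, jac, jac, map_sum]
    refine Finset.sum_congr rfl fun a _ => ?_
    rw [map_mul, starRingEnd_apply, starRingEnd_apply, MulChar.star_apply', MulChar.star_apply',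
      hinv2, hinv]
  have hstar : star z = jacobiSum (χ₀ ^ 3) (χ₀ ^ 2) := by
    apply hinj
    rw [← hz2, hJ]
  have hnorm : (Fintype.card F : ℤ) = z.re ^ 2 + z.im ^ 2 := by
    have hch : ringChar ℂ ≠ ringChar F := by
      rw [ringChar.eq F p, ringChar.eq_zero]
      exact hp.ne_zero.symm
    have h := jacobiSum_mul_jacobiSum_inv hch h1 h2 (by rwa [← pow_succ'])
    rw [hinv, hinv2] at h
    change jac χ (χ ^ 2) * jac (χ ^ 3) (χ ^ 2) = _ at h
    rw [hz1, hz2, ← map_mul] at h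
    have h' : z * star z = ((Fintype.card F : ℕ) : GaussianInt) := by
      apply hinj
      rw [h, map_natCast]
    have h'' := congrArg Zsqrtd.re h'
    simp only [Zsqrtd.re_mul, Zsqrtd.re_star, Zsqrtd.im_star, Zsqrtd.re_natCast] at h''
    linarith
  refine ⟨z, hz1, hz2, hnorm, ?_, ?_, ?_⟩
  · obtain ⟨w, hw⟩ := jacobiSum_congr χ₀ h4' h1' h2'
    rw [← hz] at hw
    have hre := congrArg Zsqrtd.re hw
    have him := congrArg Zsqrtd.im hw
    simp only [Zsqrtd.re_add, Zsqrtd.im_add, Zsqrtd.re_mul, Zsqrtd.im_mul, Zsqrtd.re_natCast,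
      Zsqrtd.im_natCast] at hre him
    rw [hn] at hre hnorm
    push_cast at hre hnorm
    generalize z.re = a at *
    generalize z.im = b at *
    generalize w.re = c at *
    generalize w.im = d at *
    obtain ⟨m, hm⟩ : ∃ m, n = 2 * m + 1 := ⟨n / 2, by omega⟩
    subst hm
    push_cast at hre hnorm
    obtain ⟨u, hu⟩ : ∃ u, u = c + d := ⟨_, rfl⟩
    have ha : a = 2 * u - (8 * m + 5) := by rw [hu]; linarith
    have hb : b = 2 * (u - 2 * c) := by rw [hu]; linarith
    rcases Int.even_or_odd' u with ⟨t, rfl | rfl⟩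
    · exfalso
      rw [ha, hb] at hnorm
      ring_nf at hnorm
      omega
    · omega
  · intro hdvd
    -- reduction `ℤ[i] → F` sending `i` to `g ^ n`
    let f : GaussianInt →+* F := Zsqrtd.lift ⟨(g : F) ^ n, by
      rw [← pow_add, ← two_mul, hgn]; simp⟩
    have hf : χ₀.ringHomComp f = MulChar.ofUnitHom (powMonoidHom n) := by
      rw [MulChar.eq_iff hg, MulChar.ringHomComp_apply, hχ₀g, MulChar.ofUnitHom_coe]
      simp [f, Zsqrtd.lift]
    have hfa : ∀ a : F, f (χ₀ a) = a ^ n := by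
      intro a
      rw [← MulChar.ringHomComp_apply, hf]
      rcases eq_or_ne a 0 with rfl | ha
      · rw [MulChar.map_zero, zero_pow (by omega)]
      · lift a to Fˣ using isUnit_iff_ne_zero.mpr ha
        rw [MulChar.ofUnitHom_coe]; simp
    have hsum : z + star z = ((2 * z.re : ℤ) : GaussianInt) := by
      ext <;> simp
      ring
    have hf0 : f (z + star z) = 0 := by
      rw [hsum, map_intCast, CharP.intCast_eq_zero_iff F p]
      exact hdvd.mul_left 2
    rw [hstar, map_add, hz, jacobiSum, jacobiSum, map_sum, map_sum] at hf0
    have hs := sum_pow_eq (F := F) (n := n) (by omega) hn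
    simp only [map_mul, MulChar.pow_apply' χ₀ two_ne_zero, MulChar.pow_apply' χ₀ three_ne_zero,
      map_pow, hfa, ← pow_mul] at hf0
    rw [mul_comm n 2, mul_comm n 3, hs] at hf0
    have hc0 : (((2 * n).choose n : ℕ) : F) = 0 := by
      simpa using hf0
    rw [CharP.cast_eq_zero_iff F p] at hc0
    exact not_dvd_choose hp (c := p / 4) (by omega) r n (by rw [← hq, hn]) hc0
  · rw [← hgn, map_pow, hgI, pow_mul, Complex.I_sq]
    exact Odd.neg_one_pow (Nat.odd_iff.mpr hodd)

theorem stmt_19 {F : Type} [Field F] [Fintype F] (p r q : ℕ)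
    (hp : p.Prime) (hq : q = p ^ r) (hcard : Fintype.card F = q) (hmod : q % 8 = 5)
    (x y : ℤ) (hxy : (q : ℤ) = x ^ 2 + y ^ 2) (hx : x % 4 = 1) (hpx : ¬ (p : ℤ) ∣ x)
    (χ₄ : MulChar F ℂ) (hχ₄ : orderOf χ₄ = 4) :
    Rk 4 χ₄ = 2 * (x : ℂ) ∧
    Sk 4 χ₄ = 4 * (x : ℂ) ^ 2 - 6 * (q : ℂ) ∧
    Smk 4 χ₄ = 2 * (q : ℂ) - 4 * (x : ℂ) ^ 2 := by
  have hr0 : r ≠ 0 := by rintro rfl; simp at hq; omega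
  have hmodr : p ^ r % 8 = 5 := hq ▸ hmod
  -- an even power of an odd number is `1 (mod 8)`, hence `r` is odd and `p ≡ p ^ r ≡ 5 (mod 8)`
  have hp8 : p % 4 = 1 := by
    have hpodd : p % 2 = 1 := by
      rcases Nat.mod_two_eq_zero_or_one p with h | h
      · have : 2 ∣ p ^ r := dvd_pow (Nat.dvd_of_mod_eq_zero h) hr0
        omega
      · exact h
    have hpp : p * p % 8 = 1 := by
      have : p % 8 = 1 ∨ p % 8 = 3 ∨ p % 8 = 5 ∨ p % 8 = 7 := by omega
      rcases this with h | h | h | h <;> simp [Nat.mul_mod, h]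
    rcases Nat.even_or_odd' r with ⟨k, rfl | rfl⟩
    · rw [pow_mul, Nat.pow_mod, sq, hpp] at hmodr; simp at hmodr
    · rw [pow_succ, Nat.mul_mod, pow_mul, Nat.pow_mod, sq, hpp] at hmodr
      simp at hmodr; omega
  obtain ⟨z, hz1, hz2, hnorm, hre, hpre, hneg⟩ := jac_key p r (q / 4) hp (hcard.trans hq)
    (by omega) (by omega) hp8 χ₄ hχ₄
  rw [hcard] at hnorm
  have hx' : z.re = x := sq_add_sq_unique hp hr0 (by exact_mod_cast hq) (by omega) hnorm hxy hre hx
    hpre hpx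
  have h4 : χ₄ ^ 4 = 1 := hχ₄ ▸ pow_orderOf_eq_one χ₄
  have hinv : χ₄⁻¹ = χ₄ ^ 3 := by
    rw [inv_eq_iff_mul_eq_one, ← pow_succ', h4]
  have comm : ∀ A B : MulChar F ℂ, jac A B = jac B A := fun A B => jacobiSum_comm A B
  have i2 : (χ₄ ^ 3) ^ 2 = χ₄ ^ 2 := by
    rw [← pow_mul, show 3 * 2 = 4 + 2 from rfl, pow_add, h4, one_mul]
  have i3 : (χ₄ ^ 3) ^ 3 = χ₄ := by
    rw [← pow_mul, show 3 * 3 = 4 * 2 + 1 from rfl, pow_succ, pow_mul, h4, one_pow, one_mul]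
  have j11 : jac χ₄ χ₄ = -jac χ₄ (χ₄ ^ 2) := by
    rw [jac_eq_neg_one_mul χ₄ χ₄ (χ₄ ^ 2) (by rw [← sq, ← pow_add, h4]), hneg, neg_one_mul]
  have j33 : jac (χ₄ ^ 3) (χ₄ ^ 3) = -jac (χ₄ ^ 3) (χ₄ ^ 2) := by
    rw [jac_eq_neg_one_mul (χ₄ ^ 3) (χ₄ ^ 3) (χ₄ ^ 2) (by rw [← sq, i2, ← pow_add, h4]),
      MulChar.pow_apply' χ₄ three_ne_zero, hneg]
    ring
  have j21 : jac (χ₄ ^ 2) χ₄ = jac χ₄ (χ₄ ^ 2) := comm _ _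
  have j23 : jac (χ₄ ^ 2) (χ₄ ^ 3) = jac (χ₄ ^ 3) (χ₄ ^ 2) := comm _ _
  rw [hz1] at j11 j21
  rw [hz2] at j33 j23
  have hI : Finset.Icc 1 (4 - 1) = {1, 2, 3} := by decide
  have c11 : ((1 : ℕ) : ZMod 4) = 1 := by decide
  have c22 : ((2 : ℕ) : ZMod 4) = 2 := by decide
  have c33 : ((3 : ℕ) : ZMod 4) = 3 := by decide
  have hsumz : (z : ℂ) + (star z : GaussianInt) = 2 * (x : ℂ) := by
    rw [GaussianInt.toComplex_def, GaussianInt.toComplex_def, ← hx']; simp; ring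
  have hmulz : (z : ℂ) * (star z : GaussianInt) = (q : ℂ) := by
    have : (q : ℂ) = (z.re : ℂ) ^ 2 + (z.im : ℂ) ^ 2 := by exact_mod_cast congrArg (Int.cast (R := ℂ)) hnorm
    rw [this, GaussianInt.toComplex_def, GaussianInt.toComplex_def]; simp
    linear_combination -(z.im : ℂ) ^ 2 * Complex.I_sq
  -- only `J + J' = 2 x` and `J * J' = q` matter from here on
  generalize (z : ℂ) = J at *
  generalize ((star z : GaussianInt) : ℂ) = J' at *
  have d1 : (1 : ZMod 4) + 1 ≠ 0 := by decide
  have d2 : (1 : ZMod 4) + 2 ≠ 0 := by decide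
  have d3 : (1 : ZMod 4) + 3 = 0 := by decide
  have d4 : (2 : ZMod 4) + 1 ≠ 0 := by decide
  have d5 : (2 : ZMod 4) + 2 = 0 := by decide
  have d6 : (2 : ZMod 4) + 3 ≠ 0 := by decide
  have d7 : (3 : ZMod 4) + 1 = 0 := by decide
  have d8 : (3 : ZMod 4) + 2 ≠ 0 := by decide
  have d9 : (3 : ZMod 4) + 3 ≠ 0 := by decide
  have s12 : (1 : ZMod 4) - 2 ≠ 0 := by decide
  have s13 : (1 : ZMod 4) - 3 ≠ 0 := by decide
  have s21 : (2 : ZMod 4) - 1 ≠ 0 := by decide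
  have s23 : (2 : ZMod 4) - 3 ≠ 0 := by decide
  have s31 : (3 : ZMod 4) - 1 ≠ 0 := by decide
  have s32 : (3 : ZMod 4) - 2 ≠ 0 := by decide
  refine ⟨?_, ?_, ?_⟩
  · unfold Rk
    rw [hI]
    simp [d1, d2, d3, d4, d5, d6, d7, d8, d9, hz1, hz2, j11, j33, j21, j23]
    linear_combination hsumz
  · unfold Sk
    rw [hI, hinv]
    simp [d1, d2, d3, d4, d5, d6, d7, d8, d9, s12, s13, s21, s23, s31, s32, i2, i3,
      hz1, hz2, j11, j33, j21, j23]
    linear_combination (J + J' + 2 * x) * hsumz - 6 * hmulz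
  · unfold Smk
    rw [hI, hinv]
    simp [d1, d2, d3, d4, d5, d6, d7, d8, d9, s12, s13, s21, s23, s31, s32, i2, i3,
      hz1, hz2, j11, j33, j21, j23]
    linear_combination -(J + J' + 2 * x) * hsumz + 2 * hmulz
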